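/- Let (Q,·,e) be a loop with left and middle nuclear squares and let N = Nuc_ℓ(Q) ∩ Nuc_m(Q). Then the set {L_a : a ∈ N} is a normal subgroup of the multiplication group Mlt(Q) = ⟨L_x, R_x : x ∈ Q⟩ (a subgroup of the symmetric group on Q), and N is a normal subloop of Q. -/

import Mathlib

/-- A loop `(Q, ·, e)`: a quasigroup with two-sided identity, presented with
explicit left division `ldiv a b = a \ b` and right division `rdiv b a = b / a`. -/
structure LoopStr (Q : Type*) where
  mul : Q → Q → Q
  e : Q
  ldiv : Q → Q → Q
  rdiv : Q → Q → Q
  one_mul : ∀ x, mul e x = x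
  mul_one : ∀ x, mul x e = x
  mul_ldiv : ∀ a b, mul a (ldiv a b) = b
  ldiv_mul : ∀ a b, ldiv a (mul a b) = b
  rdiv_mul : ∀ a b, mul (rdiv b a) a = b
  mul_rdiv : ∀ a b, rdiv (mul b a) a = b

namespace LoopStr

variable {Q : Type*} (S : LoopStr Q)

/-- The left inverse `x^ℓ = e / x`. -/
def linv (x : Q) : Q := S.rdiv S.e x

/-- The right inverse `x^r = x \ e`. -/
def rinv (x : Q) : Q := S.ldiv x S.e

/-- The left nucleus. -/
def lnuc : Set Q := {a | ∀ x y, S.mul (S.mul a x) y = S.mul a (S.mul x y)}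

/-- The middle nucleus. -/
def mnuc : Set Q := {a | ∀ x y, S.mul (S.mul x a) y = S.mul x (S.mul a y)}

/-- The right nucleus. -/
def rnuc : Set Q := {a | ∀ x y, S.mul (S.mul x y) a = S.mul x (S.mul y a)}

/-- The commutant `C(Q)`. -/
def commutant : Set Q := {a | ∀ x, S.mul a x = S.mul x a}

/-- The center `Z(Q) = C(Q) ∩ Nuc_ℓ ∩ Nuc_m ∩ Nuc_r`. -/
def center : Set Q := S.commutant ∩ S.lnuc ∩ S.mnuc ∩ S.rnuc

/-- The left translation `L_a` as a map. -/
def leftMul (a : Q) : Q → Q := fun x => S.mul a x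

/-- The left translation `L_a` as a permutation of `Q`. -/
def leftPerm (a : Q) : Equiv.Perm Q :=
  ⟨fun x => S.mul a x, fun x => S.ldiv a x, S.ldiv_mul a, S.mul_ldiv a⟩

/-- The right translation `R_a` as a permutation of `Q`. -/
def rightPerm (a : Q) : Equiv.Perm Q :=
  ⟨fun x => S.mul x a, fun x => S.rdiv x a, fun x => S.mul_rdiv a x, fun x => S.rdiv_mul a x⟩

/-- The multiplication group `Mlt(Q) = ⟨L_x, R_x : x ∈ Q⟩ ≤ Sym(Q)`. -/
def Mlt : Subgroup (Equiv.Perm Q) :=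
  Subgroup.closure (Set.range S.leftPerm ∪ Set.range S.rightPerm)

/-- `x^n = L_x^n(e)` for natural `n`. -/
def npow (a : Q) (n : ℕ) : Q := (S.leftPerm a ^ n) S.e

/-- `x^n = L_x^n(e)` for integer `n`. -/
def zpow (a : Q) (n : ℤ) : Q := (S.leftPerm a ^ n) S.e

/-- The order of an element: the least `n > 0` with `x^n = e` (or `0` if none exists). -/
noncomputable def lorder (a : Q) : ℕ := sInf {n : ℕ | 0 < n ∧ S.npow a n = S.e}

/-- A subloop: contains `e`, closed under multiplication and both divisions. -/
def IsSubloop (N : Set Q) : Prop :=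
  S.e ∈ N ∧ (∀ a ∈ N, ∀ b ∈ N, S.mul a b ∈ N) ∧
    (∀ a ∈ N, ∀ b ∈ N, S.ldiv a b ∈ N) ∧ (∀ a ∈ N, ∀ b ∈ N, S.rdiv a b ∈ N)

/-- A normal subloop: a subloop with `xN = Nx`, `(xN)y = x(Ny)`, `N(xy) = (Nx)y`
elementwise as sets. -/
def IsNormalSubloop (N : Set Q) : Prop :=
  S.IsSubloop N ∧
  (∀ x : Q, (fun a => S.mul x a) '' N = (fun a => S.mul a x) '' N) ∧
  (∀ x y : Q, (fun a => S.mul (S.mul x a) y) '' N = (fun a => S.mul x (S.mul a y)) '' N) ∧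
  (∀ x y : Q, (fun a => S.mul a (S.mul x y)) '' N = (fun a => S.mul (S.mul a x) y) '' N)

/-- A loop is simple if its only normal subloops are `{e}` and `Q`. -/
def IsSimple : Prop :=
  ∀ N : Set Q, S.IsNormalSubloop N → N = {S.e} ∨ N = Set.univ

lemma mul_rinv (x : Q) : S.mul x (S.rinv x) = S.e := S.mul_ldiv x S.e

lemma linv_mul (x : Q) : S.mul (S.linv x) x = S.e := S.rdiv_mul x S.e

lemma linv_rinv (x : Q) : S.linv (S.rinv x) = x := by
  have h := S.mul_rdiv (S.rinv x) x
  rw [S.mul_rinv] at h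
  exact h

lemma rinv_linv (x : Q) : S.rinv (S.linv x) = x := by
  have h := S.ldiv_mul (S.linv x) x
  rw [S.linv_mul] at h
  exact h

lemma rinv_e : S.rinv S.e = S.e := by
  have h := S.ldiv_mul S.e S.e
  rw [S.one_mul] at h
  exact h

lemma rdiv_e (x : Q) : S.rdiv x S.e = x := by
  have h := S.mul_rdiv S.e x
  rw [S.mul_one] at h
  exact h

/-- The principal right isostrophe `(Q, ∘)` of `(Q, ·)`, with `x ∘ y = x / (y^r)`,
right division `x // y = x·(y^r)` and left division `x \\ y = (y \ x)^ℓ`. -/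
def iso : LoopStr Q where
  mul x y := S.rdiv x (S.rinv y)
  e := S.e
  ldiv x y := S.linv (S.ldiv y x)
  rdiv x y := S.mul x (S.rinv y)
  one_mul x := S.linv_rinv x
  mul_one x := by
    show S.rdiv x (S.rinv S.e) = x
    rw [S.rinv_e, S.rdiv_e]
  mul_ldiv a b := by
    show S.rdiv a (S.rinv (S.linv (S.ldiv b a))) = b
    rw [S.rinv_linv]
    have h := S.mul_rdiv (S.ldiv b a) b
    rw [S.mul_ldiv] at h
    exact h
  ldiv_mul a b := by
    show S.linv (S.ldiv (S.rdiv a (S.rinv b)) a) = b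
    have h := S.ldiv_mul (S.rdiv a (S.rinv b)) (S.rinv b)
    rw [S.rdiv_mul] at h
    rw [h, S.linv_rinv]
  rdiv_mul a b := by
    show S.rdiv (S.mul b (S.rinv a)) (S.rinv a) = b
    exact S.mul_rdiv (S.rinv a) b
  mul_rdiv a b := by
    show S.mul (S.rdiv b (S.rinv a)) (S.rinv a) = b
    exact S.rdiv_mul (S.rinv a) b

end LoopStr

/-!
For `N ⊆ Nuc_ℓ ∩ Nuc_m`, conjugation by `R_x` fixes every `L_a` with `a ∈ N`, and `x a = b x` with
`a, b ∈ N` says that conjugation by `L_x` takes `L_a` to `L_b`. So everything reduces to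
`x N = N x`. If `a ∈ N`, then `(a x)² = a ((x a) x)` puts `(x a) x` in `N`; dividing it by `x²` on
the right gives `b ∈ N` with `b x = x a`. Conversely, with `r = y \ e` one has `r² y = r`, whence
`(y r²) y = e`; for `b ∈ N`, taking `y = c x` with `c = (b x²)⁻¹`, the element `a = r² c` satisfies
`(x a) x = c⁻¹ = (b x) x`, that is, `x a = b x`.
-/

namespace LoopStr

variable {Q : Type*} {S : LoopStr Q} {N M : Set Q} {a b x : Q}

lemma mul_left_cancel (S : LoopStr Q) (x : Q) (h : S.mul x a = S.mul x b) : a = b :=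
  (S.leftPerm x).injective h

lemma mul_right_cancel (S : LoopStr Q) (x : Q) (h : S.mul a x = S.mul b x) : a = b :=
  (S.rightPerm x).injective h

lemma IsSubloop.e_mem (hN : S.IsSubloop N) : S.e ∈ N :=
  hN.1

lemma IsSubloop.mul_mem (hN : S.IsSubloop N) (ha : a ∈ N) (hb : b ∈ N) : S.mul a b ∈ N :=
  hN.2.1 a ha b hb

lemma IsSubloop.ldiv_mem (hN : S.IsSubloop N) (ha : a ∈ N) (hb : b ∈ N) : S.ldiv a b ∈ N :=
  hN.2.2.1 a ha b hb

lemma IsSubloop.rdiv_mem (hN : S.IsSubloop N) (ha : a ∈ N) (hb : b ∈ N) : S.rdiv a b ∈ N :=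
  hN.2.2.2 a ha b hb

lemma IsSubloop.inter (hN : S.IsSubloop N) (hM : S.IsSubloop M) : S.IsSubloop (N ∩ M) :=
  ⟨⟨hN.e_mem, hM.e_mem⟩,
    fun _ ha _ hb => ⟨hN.mul_mem ha.1 hb.1, hM.mul_mem ha.2 hb.2⟩,
    fun _ ha _ hb => ⟨hN.ldiv_mem ha.1 hb.1, hM.ldiv_mem ha.2 hb.2⟩,
    fun _ ha _ hb => ⟨hN.rdiv_mem ha.1 hb.1, hM.rdiv_mem ha.2 hb.2⟩⟩

lemma e_mem_lnuc : S.e ∈ S.lnuc := fun x y => by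
  rw [S.one_mul, S.one_mul]

lemma mul_mem_lnuc (ha : a ∈ S.lnuc) (hb : b ∈ S.lnuc) : S.mul a b ∈ S.lnuc := fun x y => by
  rw [ha, ha, hb, ha]

lemma ldiv_mem_lnuc (ha : a ∈ S.lnuc) (hb : b ∈ S.lnuc) : S.ldiv a b ∈ S.lnuc := fun x y =>
  S.mul_left_cancel a (by rw [← ha, ← ha, ← ha, S.mul_ldiv, hb])

lemma rinv_mul_of_mem_lnuc (ha : a ∈ S.lnuc) : S.mul (S.rinv a) a = S.e :=
  S.mul_left_cancel a (by rw [← ha, S.mul_rinv, S.one_mul, S.mul_one])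

lemma rdiv_eq_mul_rinv_of_mem_lnuc (ha : a ∈ S.lnuc) (hb : b ∈ S.lnuc) :
    S.rdiv a b = S.mul a (S.rinv b) :=
  S.mul_right_cancel b (by rw [S.rdiv_mul, ha, rinv_mul_of_mem_lnuc hb, S.mul_one])

lemma isSubloop_lnuc : S.IsSubloop S.lnuc :=
  ⟨e_mem_lnuc, fun _ ha _ hb => mul_mem_lnuc ha hb, fun _ ha _ hb => ldiv_mem_lnuc ha hb,
    fun a ha b hb => by
      rw [rdiv_eq_mul_rinv_of_mem_lnuc ha hb]
      exact mul_mem_lnuc ha (ldiv_mem_lnuc hb e_mem_lnuc)⟩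

lemma e_mem_mnuc : S.e ∈ S.mnuc := fun x y => by
  rw [S.mul_one, S.one_mul]

lemma mul_mem_mnuc (ha : a ∈ S.mnuc) (hb : b ∈ S.mnuc) : S.mul a b ∈ S.mnuc := fun x y => by
  rw [← ha, hb, ha, ← hb]

lemma linv_eq_rinv_of_mem_mnuc (ha : a ∈ S.mnuc) : S.linv a = S.rinv a := by
  rw [← S.mul_one (S.linv a), ← S.mul_rinv a, ← ha, S.linv_mul, S.one_mul]

lemma ldiv_eq_rinv_mul_of_mem_mnuc (ha : a ∈ S.mnuc) (x : Q) :
    S.ldiv a x = S.mul (S.rinv a) x := by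
  rw [← linv_eq_rinv_of_mem_mnuc ha, ← S.one_mul (S.ldiv a x), ← S.linv_mul a, ha, S.mul_ldiv]

lemma rdiv_eq_mul_rinv_of_mem_mnuc (ha : a ∈ S.mnuc) (x : Q) :
    S.rdiv x a = S.mul x (S.rinv a) := by
  rw [← S.mul_one (S.rdiv x a), ← S.mul_rinv a, ← ha, S.rdiv_mul]

lemma rinv_mem_mnuc (ha : a ∈ S.mnuc) : S.rinv a ∈ S.mnuc := fun x y => by
  have hdiv := ha (S.rdiv x a) (S.ldiv a y)
  rw [S.rdiv_mul, S.mul_ldiv] at hdiv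
  rw [← rdiv_eq_mul_rinv_of_mem_mnuc ha, ← ldiv_eq_rinv_mul_of_mem_mnuc ha, hdiv]

lemma isSubloop_mnuc : S.IsSubloop S.mnuc :=
  ⟨e_mem_mnuc, fun _ ha _ hb => mul_mem_mnuc ha hb,
    fun a ha b hb => by
      rw [ldiv_eq_rinv_mul_of_mem_mnuc ha]
      exact mul_mem_mnuc (rinv_mem_mnuc ha) hb,
    fun a ha b hb => by
      rw [rdiv_eq_mul_rinv_of_mem_mnuc hb]
      exact mul_mem_mnuc ha (rinv_mem_mnuc hb)⟩

lemma leftPerm_e : S.leftPerm S.e = 1 :=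
  Equiv.ext S.one_mul

lemma leftPerm_mul_of_mem_lnuc (ha : a ∈ S.lnuc) (x : Q) :
    S.leftPerm (S.mul a x) = S.leftPerm a * S.leftPerm x :=
  Equiv.ext (ha x)

lemma leftPerm_mul_of_mem_mnuc (ha : a ∈ S.mnuc) (x : Q) :
    S.leftPerm (S.mul x a) = S.leftPerm x * S.leftPerm a :=
  Equiv.ext (ha x)

lemma leftPerm_rinv_of_mem_lnuc (ha : a ∈ S.lnuc) :
    S.leftPerm (S.rinv a) = (S.leftPerm a)⁻¹ :=
  eq_inv_of_mul_eq_one_right (by rw [← leftPerm_mul_of_mem_lnuc ha, S.mul_rinv, leftPerm_e])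

lemma commute_rightPerm_leftPerm (ha : a ∈ S.lnuc) (x : Q) :
    Commute (S.rightPerm x) (S.leftPerm a) :=
  Equiv.ext fun y => ha y x

lemma semiconjBy_leftPerm (ha : a ∈ S.mnuc) (hb : b ∈ S.lnuc) (h : S.mul x a = S.mul b x) :
    SemiconjBy (S.leftPerm x) (S.leftPerm a) (S.leftPerm b) := by
  rw [SemiconjBy, ← leftPerm_mul_of_mem_mnuc ha, h, leftPerm_mul_of_mem_lnuc hb]

/-- The group `{L_a : a ∈ N}` of left translations by a subloop `N` of the left nucleus. -/
def leftPermSubgroup (hN : S.IsSubloop N) (hl : N ⊆ S.lnuc) : Subgroup (Equiv.Perm Q) where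
  carrier := S.leftPerm '' N
  one_mem' := ⟨S.e, hN.e_mem, leftPerm_e⟩
  mul_mem' := by
    rintro _ _ ⟨a, ha, rfl⟩ ⟨b, hb, rfl⟩
    exact ⟨S.mul a b, hN.mul_mem ha hb, leftPerm_mul_of_mem_lnuc (hl ha) b⟩
  inv_mem' := by
    rintro _ ⟨a, ha, rfl⟩
    exact ⟨S.rinv a, hN.ldiv_mem ha hN.e_mem, leftPerm_rinv_of_mem_lnuc (hl ha)⟩

lemma leftPermSubgroup_le_Mlt (hN : S.IsSubloop N) (hl : N ⊆ S.lnuc) :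
    leftPermSubgroup hN hl ≤ S.Mlt := by
  rintro _ ⟨a, -, rfl⟩
  exact Subgroup.subset_closure (Or.inl ⟨a, rfl⟩)

lemma rightPerm_mem_normalizer (hN : S.IsSubloop N) (hl : N ⊆ S.lnuc) (x : Q) :
    S.rightPerm x ∈ Subgroup.normalizer (leftPermSubgroup hN hl : Set (Equiv.Perm Q)) := by
  apply Subgroup.centralizer_le_normalizer
  rintro _ ⟨a, ha, rfl⟩
  exact (commute_rightPerm_leftPerm (hl ha) x).symm

lemma leftPerm_mem_normalizer (hN : S.IsNormalSubloop N) (hl : N ⊆ S.lnuc) (hm : N ⊆ S.mnuc)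
    (x : Q) :
    S.leftPerm x ∈ Subgroup.normalizer (leftPermSubgroup hN.1 hl : Set (Equiv.Perm Q)) := by
  have hx := hN.2.1 x
  refine Subgroup.mem_normalizer_iff.2 fun p => ⟨?_, ?_⟩
  · rintro ⟨a, ha, rfl⟩
    obtain ⟨b, hb, hba⟩ := hx.subset ⟨a, ha, rfl⟩
    exact ⟨b, hb, eq_mul_inv_of_mul_eq (semiconjBy_leftPerm (hm ha) (hl hb) hba.symm).symm⟩
  · rintro ⟨b, hb, hbp⟩
    obtain ⟨a, ha, hab⟩ := hx.superset ⟨b, hb, rfl⟩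
    have hap : S.leftPerm x * S.leftPerm a = S.leftPerm x * p :=
      (semiconjBy_leftPerm (hm ha) (hl hb) hab).eq.trans (eq_mul_inv_iff_mul_eq.1 hbp)
    exact ⟨a, ha, _root_.mul_left_cancel hap⟩

lemma Mlt_le_normalizer (hN : S.IsNormalSubloop N) (hl : N ⊆ S.lnuc) (hm : N ⊆ S.mnuc) :
    S.Mlt ≤ Subgroup.normalizer (leftPermSubgroup hN.1 hl : Set (Equiv.Perm Q)) := by
  rw [Mlt, Subgroup.closure_le]
  rintro _ (⟨x, rfl⟩ | ⟨x, rfl⟩)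
  · exact leftPerm_mem_normalizer hN hl hm x
  · exact rightPerm_mem_normalizer hN.1 hl x

lemma sq_mul_linv (hx : S.mul x x ∈ S.lnuc) : S.mul (S.mul x x) (S.linv x) = x :=
  S.mul_right_cancel x (by rw [hx, S.linv_mul, S.mul_one])

lemma mul_rinv_sq_mul_self (hx : S.mul (S.rinv x) (S.rinv x) ∈ S.lnuc ∩ S.mnuc) :
    S.mul (S.mul x (S.mul (S.rinv x) (S.rinv x))) x = S.e := by
  have hr := sq_mul_linv hx.1
  rw [S.linv_rinv] at hr
  rw [hx.2, hr, S.mul_rinv]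

lemma mul_mul_self_mem (hN : S.IsSubloop N) (hl : N ⊆ S.lnuc) (hm : N ⊆ S.mnuc)
    (hsq : ∀ x, S.mul x x ∈ N) (ha : a ∈ N) (x : Q) : S.mul (S.mul x a) x ∈ N := by
  have hax : S.mul (S.mul a x) (S.mul a x) = S.mul a (S.mul (S.mul x a) x) := by
    rw [hl ha, hm ha]
  have hdiv := hN.ldiv_mem ha (hsq (S.mul a x))
  rwa [hax, S.ldiv_mul] at hdiv

lemma exists_mul_eq_mul_left (hN : S.IsSubloop N) (hl : N ⊆ S.lnuc) (hm : N ⊆ S.mnuc)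
    (hsq : ∀ x, S.mul x x ∈ N) (ha : a ∈ N) (x : Q) : ∃ b ∈ N, S.mul b x = S.mul x a := by
  have hb := hN.rdiv_mem (mul_mul_self_mem hN hl hm hsq ha x) (hsq x)
  exact ⟨_, hb, S.mul_right_cancel x (by rw [hl hb, S.rdiv_mul])⟩

lemma exists_mul_mul_self_eq (hN : S.IsSubloop N) (hl : N ⊆ S.lnuc) (hm : N ⊆ S.mnuc)
    (hsq : ∀ x, S.mul x x ∈ N) (hb : b ∈ N) (x : Q) : ∃ a ∈ N, S.mul (S.mul x a) x = b := by
  set c := S.linv b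
  set y := S.mul c x with hy
  set s := S.mul (S.rinv y) (S.rinv y)
  have hc : c ∈ N := hN.rdiv_mem hN.e_mem hb
  have hs : s ∈ N := hsq (S.rinv y)
  refine ⟨S.mul s c, hN.mul_mem hs hc, S.mul_left_cancel c ?_⟩
  calc S.mul c (S.mul (S.mul x (S.mul s c)) x)
      = S.mul (S.mul y (S.mul s c)) x := by rw [hy, hl hc, hl hc]
    _ = S.mul (S.mul y s) y := by rw [← hm hs, hm hc]
    _ = S.e := mul_rinv_sq_mul_self ⟨hl hs, hm hs⟩
    _ = S.mul c b := (S.linv_mul b).symm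

lemma exists_mul_eq_mul_right (hN : S.IsSubloop N) (hl : N ⊆ S.lnuc) (hm : N ⊆ S.mnuc)
    (hsq : ∀ x, S.mul x x ∈ N) (hb : b ∈ N) (x : Q) : ∃ a ∈ N, S.mul x a = S.mul b x := by
  obtain ⟨a, ha, hab⟩ := exists_mul_mul_self_eq hN hl hm hsq (hN.mul_mem hb (hsq x)) x
  exact ⟨a, ha, S.mul_right_cancel x (by rw [hab, hl hb])⟩

lemma isNormalSubloop_of_sq_mem (hN : S.IsSubloop N) (hl : N ⊆ S.lnuc) (hm : N ⊆ S.mnuc)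
    (hsq : ∀ x, S.mul x x ∈ N) : S.IsNormalSubloop N := by
  refine ⟨hN, fun x => Set.Subset.antisymm ?_ ?_,
    fun x y => Set.image_congr fun a ha => hm ha x y,
    fun x y => Set.image_congr fun a ha => (hl ha x y).symm⟩
  · rintro _ ⟨a, ha, rfl⟩
    exact exists_mul_eq_mul_left hN hl hm hsq ha x
  · rintro _ ⟨b, hb, rfl⟩
    exact exists_mul_eq_mul_right hN hl hm hsq hb x

end LoopStr

theorem lmnuc_normal_general {Q : Type*} (S : LoopStr Q) {N : Set Q} (hN : S.IsSubloop N)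
    (hl : N ⊆ S.lnuc) (hm : N ⊆ S.mnuc) (hsq : ∀ x, S.mul x x ∈ N) :
    (S.leftPerm '' N ⊆ (S.Mlt : Set (Equiv.Perm Q))) ∧
    (1 : Equiv.Perm Q) ∈ S.leftPerm '' N ∧
    (∀ p ∈ S.leftPerm '' N, ∀ q ∈ S.leftPerm '' N, p * q ∈ S.leftPerm '' N) ∧
    (∀ p ∈ S.leftPerm '' N, p⁻¹ ∈ S.leftPerm '' N) ∧
    (∀ g ∈ S.Mlt, ∀ p ∈ S.leftPerm '' N, g * p * g⁻¹ ∈ S.leftPerm '' N) ∧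
    S.IsNormalSubloop N := by
  have hnormal := LoopStr.isNormalSubloop_of_sq_mem hN hl hm hsq
  let H := LoopStr.leftPermSubgroup hN hl
  exact ⟨LoopStr.leftPermSubgroup_le_Mlt hN hl, H.one_mem, fun _ hp _ hq => H.mul_mem hp hq,
    fun _ hp => H.inv_mem hp,
    fun g hg p hp =>
      (Subgroup.mem_normalizer_iff.1 (LoopStr.Mlt_le_normalizer hnormal hl hm hg) p).1 hp,
    hnormal⟩

/-- In a loop with left and middle nuclear squares, with
`N = Nuc_ℓ(Q) ∩ Nuc_m(Q)`, the set `{L_a : a ∈ N}` is a normal subgroup of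
`Mlt(Q)` (it is contained in `Mlt(Q)`, contains the identity, is closed under
multiplication and inverses, and is invariant under conjugation by elements of
`Mlt(Q)`), and `N` is a normal subloop of `Q`. -/
theorem lmnuc_normal {Q : Type*} (S : LoopStr Q)
    (h : ∀ x : Q, S.mul x x ∈ S.lnuc ∩ S.mnuc) :
    (S.leftPerm '' (S.lnuc ∩ S.mnuc) ⊆ (S.Mlt : Set (Equiv.Perm Q))) ∧
    (1 : Equiv.Perm Q) ∈ S.leftPerm '' (S.lnuc ∩ S.mnuc) ∧
    (∀ p ∈ S.leftPerm '' (S.lnuc ∩ S.mnuc), ∀ q ∈ S.leftPerm '' (S.lnuc ∩ S.mnuc),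
      p * q ∈ S.leftPerm '' (S.lnuc ∩ S.mnuc)) ∧
    (∀ p ∈ S.leftPerm '' (S.lnuc ∩ S.mnuc), p⁻¹ ∈ S.leftPerm '' (S.lnuc ∩ S.mnuc)) ∧
    (∀ g ∈ S.Mlt, ∀ p ∈ S.leftPerm '' (S.lnuc ∩ S.mnuc),
      g * p * g⁻¹ ∈ S.leftPerm '' (S.lnuc ∩ S.mnuc)) ∧
    S.IsNormalSubloop (S.lnuc ∩ S.mnuc) :=
  lmnuc_normal_general S (LoopStr.isSubloop_lnuc.inter LoopStr.isSubloop_mnuc)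
    Set.inter_subset_left Set.inter_subset_right h
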